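/- arXiv:1311.3354 — 3 statements merged into one kernel-verified Lean document; each statement's English description precedes it below -/
import Mathlib

section
/- Let s, t ∈ ℂ satisfy t² = 1/3 and s^{12} = −576(26t − 15). In R = ℂ[u,v,x,y] define the 2×2 matrix d¹ = [[a, b], [c, d]] with a = y² − v + (1/2)·x·(s·u)² + ((2t+1)/8)·(s·u)⁶, b = −x + y·(s·u) + ((t+1)/4)·(s·u)⁴, c = x² + y·x·(s·u) + (t/4)·x·(s·u)⁴ + ((2t+1)/4)·y·(s·u)⁵ − ((9t+5)/48)·(s·u)⁸, d = y² + v + (1/2)·x·(s·u)² + ((2t+1)/8)·(s·u)⁶. Then det(d¹) = x³ + y⁴ − u^{12} − v². Consequently, with d⁰ the adjugate of d¹, the pair (d⁰, d¹) is a rank-two matrix factorisation of V^{(E₆)}(x,y) − V^{(A_{11})}(u,v) = x³ + y⁴ − u^{12} − v². Moreover, each entry of d¹ is weighted homogeneous for the weights w(u) = 1/6, w(v) = 1, w(x) = 2/3, w(y) = 1/2, the entries having degrees [[1, 2/3], [4/3, 1]] respectively. -/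
/-!
Write `w` for `s u` and `q` for `x w² / 2 + (2t + 1) w⁶ / 8`. The diagonal entries of `d¹` are
`(y² + q) ∓ v`, so their product is `(y² + q)² - v²`. When `t² = 1/3`, the off-diagonal entries
multiply to `(y² + q)² - x³ - y⁴ - ((26t + 15) / 192) w¹²`, for every `w`. Hence
`det d¹ = x³ + y⁴ - v² + ((26t + 15) / 192) w¹²`, and since `26t + 15` and `26t - 15` have product
`1/3`, the condition on `s¹²` says exactly that the last term is `-u¹²`.
-/

open MvPolynomial

noncomputable section

/-- The polynomial ring `R = ℂ[u,v,x,y]`. -/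
abbrev R4 : Type := MvPolynomial (Fin 4) ℂ

def u : R4 := X 0
def v : R4 := X 1
def x : R4 := X 2
def y : R4 := X 3

/-- A polynomial is weighted homogeneous of degree `q` for the weights `w`. -/
def WHom (w : Fin 4 → ℚ) (q : ℚ) (p : R4) : Prop :=
  ∀ m ∈ p.support, (∑ i : Fin 4, (m i : ℚ) * w i) = q

/-- The matrix `d¹` of the E₆ orbifold equivalence. -/
def dE6 (s t : ℂ) : Matrix (Fin 2) (Fin 2) R4 :=
  !![y ^ 2 - v + C (1/2 : ℂ) * x * (C s * u) ^ 2 + C ((2*t+1)/8) * (C s * u) ^ 6,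
     -x + y * (C s * u) + C ((t+1)/4) * (C s * u) ^ 4;
     x ^ 2 + y * x * (C s * u) + C (t/4) * x * (C s * u) ^ 4
       + C ((2*t+1)/4) * y * (C s * u) ^ 5 - C ((9*t+5)/48) * (C s * u) ^ 8,
     y ^ 2 + v + C (1/2 : ℂ) * x * (C s * u) ^ 2 + C ((2*t+1)/8) * (C s * u) ^ 6]

/-- Two square matrices whose products in both orders are `f` times the identity: a matrix
factorisation `(d₀, d₁)` of `f`, whose rank is the size of the matrices. -/
def IsMatrixFactorization {n A : Type*} [Fintype n] [DecidableEq n] [CommRing A]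
    (f : A) (d₀ d₁ : Matrix n n A) : Prop :=
  d₁ * d₀ = f • (1 : Matrix n n A) ∧ d₀ * d₁ = f • (1 : Matrix n n A)

theorem isMatrixFactorization_det_adjugate {n A : Type*} [Fintype n] [DecidableEq n] [CommRing A]
    (d : Matrix n n A) : IsMatrixFactorization d.det d.adjugate d :=
  ⟨d.mul_adjugate, d.adjugate_mul⟩

theorem wHom_iff_isWeightedHomogeneous {w : Fin 4 → ℚ} {q : ℚ} {p : R4} :
    WHom w q p ↔ IsWeightedHomogeneous w p q := by
  simp only [WHom, IsWeightedHomogeneous, mem_support_iff, Finsupp.weight_eq_sum, nsmul_eq_mul]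

section Family

variable {K A : Type*} [Field K] [CommRing A] [Algebra K A]

/-- The matrix `d¹` over any commutative algebra over a field, with the product `s u` replaced by a
single element `w`; thus `dE6 s t` is `matrixE6 t v (C s * u) x y`. -/
def matrixE6 (t : K) (v w x y : A) : Matrix (Fin 2) (Fin 2) A :=
  !![y ^ 2 - v + algebraMap K A (1/2) * x * w ^ 2 + algebraMap K A ((2*t+1)/8) * w ^ 6,
     -x + y * w + algebraMap K A ((t+1)/4) * w ^ 4;
     x ^ 2 + y * x * w + algebraMap K A (t/4) * x * w ^ 4
       + algebraMap K A ((2*t+1)/4) * y * w ^ 5 - algebraMap K A ((9*t+5)/48) * w ^ 8,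
     y ^ 2 + v + algebraMap K A (1/2) * x * w ^ 2 + algebraMap K A ((2*t+1)/8) * w ^ 6]

theorem det_matrixE6 (h2 : (2 : K) ≠ 0) (h3 : (3 : K) ≠ 0) {t : K} (ht : t ^ 2 = 1 / 3)
    (v w x y : A) :
    (matrixE6 t v w x y).det
      = x ^ 3 + y ^ 4 - v ^ 2 + algebraMap K A ((26 * t + 15)/192) * w ^ 12 := by
  have h4 : (4 : K) = 2 ^ 2 := by norm_num
  have h8 : (8 : K) = 2 ^ 3 := by norm_num
  have h48 : (48 : K) = 2 ^ 4 * 3 := by norm_num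
  have h192 : (192 : K) = 2 ^ 6 * 3 := by norm_num
  -- Each identity matches the two sides at the monomial it is named after.
  have hxy2w2 : 2 * (1/2) = (1 : K) := mul_one_div_cancel h2
  have hy2w6 : 2 * ((2*t+1)/8) = (2*t+1)/4 := by rw [h8, h4]; field_simp
  have hx2w4 : (1/2) ^ 2 + t/4 = (t+1)/4 := by rw [h4]; field_simp; ring
  have hxyw5 : (2*t+1)/4 = t/4 + (t+1)/4 := by ring
  have hxw8 : 2 * (1/2) * ((2*t+1)/8) = (t+1)/4 * (t/4) + (9*t+5)/48 := by
    rw [h8, h4, h48]; field_simp at ht ⊢; linear_combination -ht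
  have hyw9 : (9*t+5)/48 = (t+1)/4 * ((2*t+1)/4) := by
    rw [h4, h48]; field_simp at ht ⊢; linear_combination -2 * ht
  have hw12 : ((2*t+1)/8) ^ 2 + (t+1)/4 * ((9*t+5)/48) = (26 * t + 15)/192 := by
    rw [h8, h4, h48, h192]; field_simp at ht ⊢; linear_combination 7 * ht
  rw [matrixE6, Matrix.det_fin_two_of]
  linear_combination (norm := algebra)
    x * y ^ 2 * w ^ 2 * congrArg (algebraMap K A) hxy2w2
    + y ^ 2 * w ^ 6 * congrArg (algebraMap K A) hy2w6
    + x ^ 2 * w ^ 4 * congrArg (algebraMap K A) hx2w4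
    + x * y * w ^ 5 * congrArg (algebraMap K A) hxyw5
    + x * w ^ 8 * congrArg (algebraMap K A) hxw8
    + y * w ^ 9 * congrArg (algebraMap K A) hyw9
    + w ^ 12 * congrArg (algebraMap K A) hw12

theorem const_mul_pow_twelve_eq_neg_one (h2 : (2 : K) ≠ 0) (h3 : (3 : K) ≠ 0) {s t : K}
    (ht : t ^ 2 = 1 / 3) (hs : s ^ 12 = -576 * (26 * t - 15)) :
    (26 * t + 15)/192 * s ^ 12 = -1 := by
  have h192 : (192 : K) = 2 ^ 6 * 3 := by norm_num
  have hconj : (26 * t + 15) * (26 * t - 15) = 1 / 3 := by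
    field_simp at ht ⊢; linear_combination 676 * ht
  calc (26 * t + 15)/192 * s ^ 12
      = -576/192 * ((26 * t + 15) * (26 * t - 15)) := by rw [hs]; ring
    _ = -1 := by rw [hconj, h192]; field_simp; norm_num

theorem matrixE6_mem_graded {ι : Type*} [AddCommMonoid ι] {𝒜 : ι → Submodule K A}
    [SetLike.GradedMonoid 𝒜] {g : ι} {v w x y : A} (hv : v ∈ 𝒜 (6 • g)) (hw : w ∈ 𝒜 g)
    (hx : x ∈ 𝒜 (4 • g)) (hy : y ∈ 𝒜 (3 • g)) (t : K) (i j : Fin 2) :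
    matrixE6 t v w x y i j ∈ 𝒜 (!![6, 4; 8, 6] i j • g) := by
  have mul_mem {a b : A} {k l : ℕ} (ha : a ∈ 𝒜 (k • g)) (hb : b ∈ 𝒜 (l • g)) :
      a * b ∈ 𝒜 ((k + l) • g) := by
    rw [add_smul]; exact SetLike.mul_mem_graded ha hb
  have pow_mem {a : A} {k : ℕ} (n : ℕ) (ha : a ∈ 𝒜 (k • g)) : a ^ n ∈ 𝒜 ((n * k) • g) := by
    rw [mul_smul]; exact SetLike.pow_mem_graded n ha
  have hc (c : K) : algebraMap K A c ∈ 𝒜 (0 • g) := by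
    rw [zero_smul]; exact SetLike.algebraMap_mem_graded 𝒜 c
  replace hw : w ∈ 𝒜 (1 • g) := by rwa [one_smul]
  have hy2 : y ^ 2 ∈ 𝒜 (6 • g) := pow_mem 2 hy
  have hxw2 : algebraMap K A (1/2) * x * w ^ 2 ∈ 𝒜 (6 • g) :=
    mul_mem (mul_mem (hc _) hx) (pow_mem 2 hw)
  have hw6 : algebraMap K A ((2*t+1)/8) * w ^ 6 ∈ 𝒜 (6 • g) := mul_mem (hc _) (pow_mem 6 hw)
  have hyw : y * w ∈ 𝒜 (4 • g) := mul_mem hy hw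
  have hw4 : algebraMap K A ((t+1)/4) * w ^ 4 ∈ 𝒜 (4 • g) := mul_mem (hc _) (pow_mem 4 hw)
  have hx2 : x ^ 2 ∈ 𝒜 (8 • g) := pow_mem 2 hx
  have hyxw : y * x * w ∈ 𝒜 (8 • g) := mul_mem (mul_mem hy hx) hw
  have hxw4 : algebraMap K A (t/4) * x * w ^ 4 ∈ 𝒜 (8 • g) :=
    mul_mem (mul_mem (hc _) hx) (pow_mem 4 hw)
  have hyw5 : algebraMap K A ((2*t+1)/4) * y * w ^ 5 ∈ 𝒜 (8 • g) :=
    mul_mem (mul_mem (hc _) hy) (pow_mem 5 hw)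
  have hw8 : algebraMap K A ((9*t+5)/48) * w ^ 8 ∈ 𝒜 (8 • g) := mul_mem (hc _) (pow_mem 8 hw)
  fin_cases i <;> fin_cases j
  · exact add_mem (add_mem (sub_mem hy2 hv) hxw2) hw6
  · exact add_mem (add_mem (neg_mem hx) hyw) hw4
  · exact sub_mem (add_mem (add_mem (add_mem hx2 hyxw) hxw4) hyw5) hw8
  · exact add_mem (add_mem (add_mem hy2 hv) hxw2) hw6

end Family

theorem stmt2_general {K A ι : Type*} [Field K] [CommRing A] [Algebra K A] [AddCommMonoid ι]
    {𝒜 : ι → Submodule K A} [SetLike.GradedMonoid 𝒜] (h2 : (2 : K) ≠ 0) (h3 : (3 : K) ≠ 0)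
    {s t : K} (ht : t ^ 2 = 1 / 3) (hs : s ^ 12 = -576 * (26 * t - 15)) {g : ι} {u v x y : A}
    (hu : u ∈ 𝒜 g) (hv : v ∈ 𝒜 (6 • g)) (hx : x ∈ 𝒜 (4 • g)) (hy : y ∈ 𝒜 (3 • g)) :
    (matrixE6 t v (algebraMap K A s * u) x y).det = x ^ 3 + y ^ 4 - u ^ 12 - v ^ 2 ∧
    IsMatrixFactorization (x ^ 3 + y ^ 4 - u ^ 12 - v ^ 2)
      (matrixE6 t v (algebraMap K A s * u) x y).adjugate
      (matrixE6 t v (algebraMap K A s * u) x y) ∧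
    ∀ i j, matrixE6 t v (algebraMap K A s * u) x y i j ∈ 𝒜 (!![6, 4; 8, 6] i j • g) := by
  have hdet : (matrixE6 t v (algebraMap K A s * u) x y).det = x ^ 3 + y ^ 4 - u ^ 12 - v ^ 2 := by
    rw [det_matrixE6 h2 h3 ht, mul_pow, ← map_pow, ← mul_assoc, ← map_mul,
      const_mul_pow_twelve_eq_neg_one h2 h3 ht hs, map_neg, map_one]
    ring
  have hsu : algebraMap K A s * u ∈ 𝒜 g := by
    rw [← Algebra.smul_def]; exact (𝒜 g).smul_mem s hu
  exact ⟨hdet, hdet ▸ isMatrixFactorization_det_adjugate _, matrixE6_mem_graded hv hsu hx hy t⟩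

/-- The weights of `u, v, x, y` as multiples of the weight `g` of `u`. -/
def weightsE6 {ι : Type*} [AddCommMonoid ι] (g : ι) : Fin 4 → ι :=
  ![g, 6 • g, 4 • g, 3 • g]

theorem weightsE6_one_sixth : weightsE6 (1/6 : ℚ) = ![1/6, 1, 2/3, 1/2] := by
  norm_num [weightsE6]

theorem degrees_nsmul_one_sixth (i j : Fin 2) :
    !![6, 4; 8, 6] i j • (1/6 : ℚ) = !![(1 : ℚ), 2/3; 4/3, 1] i j := by
  fin_cases i <;> fin_cases j <;> norm_num

attribute [local instance] WeightedHomogeneousSubmodule.gradedMonoid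

theorem stmt2 (s t : ℂ) (ht : t ^ 2 = 1/3) (hs : s ^ 12 = -576 * (26 * t - 15)) :
    (dE6 s t).det = x ^ 3 + y ^ 4 - u ^ 12 - v ^ 2 ∧
    dE6 s t * (dE6 s t).adjugate
      = (x ^ 3 + y ^ 4 - u ^ 12 - v ^ 2) • (1 : Matrix (Fin 2) (Fin 2) R4) ∧
    (dE6 s t).adjugate * dE6 s t
      = (x ^ 3 + y ^ 4 - u ^ 12 - v ^ 2) • (1 : Matrix (Fin 2) (Fin 2) R4) ∧
    ∀ i j, WHom ![1/6, 1, 2/3, 1/2] (!![(1 : ℚ), 2/3; 4/3, 1] i j) (dE6 s t i j) := by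
  obtain ⟨hdet, ⟨hright, hleft⟩, hdeg⟩ :=
    stmt2_general (𝒜 := weightedHomogeneousSubmodule ℂ (weightsE6 (1/6 : ℚ))) (g := 1/6)
      two_ne_zero three_ne_zero ht hs
      (isWeightedHomogeneous_X ℂ _ 0) (isWeightedHomogeneous_X ℂ _ 1)
      (isWeightedHomogeneous_X ℂ _ 2) (isWeightedHomogeneous_X ℂ _ 3)
  simp only [weightsE6_one_sixth, degrees_nsmul_one_sixth] at hdeg
  exact ⟨hdet, hright, hleft, fun i j ↦ wHom_iff_isWeightedHomogeneous.2 (hdeg i j)⟩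
end
end

section
/- Let s, t ∈ ℂ satisfy t² = 1/3 and s^{12} = −576(26t − 15) (so in particular s ≠ 0 and 1 − t ≠ 0). Let d¹ be the 2×2 matrix over R = ℂ[u,v,x,y] with entries a = y² − v + (1/2)·x·(s·u)² + ((2t+1)/8)·(s·u)⁶, b = −x + y·(s·u) + ((t+1)/4)·(s·u)⁴, c = x² + y·x·(s·u) + (t/4)·x·(s·u)⁴ + ((2t+1)/4)·y·(s·u)⁵ − ((9t+5)/48)·(s·u)⁸, d = y² + v + (1/2)·x·(s·u)² + ((2t+1)/8)·(s·u)⁶; let d⁰ = adjugate(d¹), d = [[0, d¹], [d⁰, 0]], and S = str(∂_u d · ∂_v d · ∂_x d · ∂_y d) ∈ R. Then: (i) for all natural numbers a', b', the coefficient of the monomial u^{a'} v^{b'} x¹ y² in S equals −12s if a' = b' = 0 and 0 otherwise; (ii) for all natural numbers c', e', the coefficient of the monomial u^{10} v⁰ x^{c'} y^{e'} in S equals −72(1−t)/s if c' = e' = 0 and 0 otherwise. Equivalently, the left quantum dimension of this matrix factorisation of x³ + y⁴ − u^{12} − v² equals s and its right quantum dimension equals 3(1−t)/s; both are non-zero.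 -/
/-!
For any rank-two `d¹` with `d⁰ = adj d¹`, the supertrace is minus the Jacobian determinant of the
four entries of `d¹`. Indeed, if `d¹ = a + P` with `a` scalar and `P` traceless, then `d⁰ = a - P`,
and the difference of the two block traces only keeps the terms with one derivative of `a` and three
derivatives of `P`; the trace of a product of three traceless `2 × 2` matrices is alternating.

Give `u, v, x, y` the weights `1, 6, 4, 3`, for which `x³ + y⁴ - u¹² - v²` has weight `12`. The
entries of `dE6` are then homogeneous of weights `6, 4, 8, 6`, so their Jacobian determinant is
homogeneous of weight `24 - 14 = 10`. This kills every coefficient in question but those of `x y²`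
and `u¹⁰`, and these two are the values of the supertrace at `(0,0,1,1)` and `(1,0,0,0)`. The second
value is `(33 t + 19)/8 · s¹¹` when `t² = 1/3`, and `(26 t - 15)(33 t + 19) = 1 - t` turns it into
`-72 (1 - t)/s`.
-/

open MvPolynomial

noncomputable section

/-- The exponent vector of the monomial `u^a v^b x^c y^e`. -/
def mon (a b c e : ℕ) : Fin 4 →₀ ℕ :=
  Finsupp.single 0 a + Finsupp.single 1 b + Finsupp.single 2 c + Finsupp.single 3 e

/-- Entrywise partial derivative of a matrix of polynomials. -/
def pd {m n : Type} (i : Fin 4) (M : Matrix m n R4) : Matrix m n R4 :=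
  M.map fun p => pderiv i p

/-- The supertrace of a `2r × 2r` block matrix. -/
def str {r : ℕ} (M : Matrix (Fin r ⊕ Fin r) (Fin r ⊕ Fin r) R4) : R4 :=
  Matrix.trace M.toBlocks₁₁ - Matrix.trace M.toBlocks₂₂

/-- The twisted differential `d = [[0, d¹], [d⁰, 0]]` with `d⁰` the adjugate of `d¹`. -/
def DE6 (s t : ℂ) : Matrix (Fin 2 ⊕ Fin 2) (Fin 2 ⊕ Fin 2) R4 :=
  Matrix.fromBlocks 0 (dE6 s t) (dE6 s t).adjugate 0

/-- The supertrace `S = str(∂_u d · ∂_v d · ∂_x d · ∂_y d)`. -/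
def SE6 (s t : ℂ) : R4 :=
  str (pd 0 (DE6 s t) * pd 1 (DE6 s t) * pd 2 (DE6 s t) * pd 3 (DE6 s t))

section SupertraceIsJacobian

/-- The entries of a `2 × 2` matrix, read row by row. -/
def entries {A : Type*} (M : Matrix (Fin 2) (Fin 2) A) : Fin 4 → A :=
  ![M 0 0, M 0 1, M 1 0, M 1 1]

/-- The Jacobian matrix of a family of polynomials; rows are indexed by the variable of
differentiation, columns by the polynomial. -/
def jacobianMatrix {σ R : Type*} [CommSemiring R] (f : σ → MvPolynomial σ R) :
    Matrix σ σ (MvPolynomial σ R) :=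
  Matrix.of fun i j => pderiv i (f j)

lemma det_fin_four {A : Type*} [CommRing A] (M : Matrix (Fin 4) (Fin 4) A) :
    M.det = (M 0 0 * M 1 1 - M 0 1 * M 1 0) * (M 2 2 * M 3 3 - M 2 3 * M 3 2)
      - (M 0 0 * M 1 2 - M 0 2 * M 1 0) * (M 2 1 * M 3 3 - M 2 3 * M 3 1)
      + (M 0 0 * M 1 3 - M 0 3 * M 1 0) * (M 2 1 * M 3 2 - M 2 2 * M 3 1)
      + (M 0 1 * M 1 2 - M 0 2 * M 1 1) * (M 2 0 * M 3 3 - M 2 3 * M 3 0)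
      - (M 0 1 * M 1 3 - M 0 3 * M 1 1) * (M 2 0 * M 3 2 - M 2 2 * M 3 0)
      + (M 0 2 * M 1 3 - M 0 3 * M 1 2) * (M 2 0 * M 3 1 - M 2 1 * M 3 0) := by
  simp only [Matrix.det_succ_row_zero (n := 3), Fin.sum_univ_four, Matrix.det_fin_three,
    Matrix.submatrix_apply, Fin.succAbove, Fin.reduceCastSucc, Fin.reduceLT, Fin.reduceSucc,
    ↓reduceIte, Fin.isValue, Fin.coe_ofNat_eq_mod]
  ring

lemma trace_mul_adjugate_sub_trace_adjugate_mul {A : Type*} [CommRing A]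
    (P Q M N : Matrix (Fin 2) (Fin 2) A) :
    (P * Q.adjugate * M * N.adjugate).trace - (P.adjugate * Q * M.adjugate * N).trace
      = -(Matrix.of ![entries P, entries Q, entries M, entries N]).det := by
  simp only [Matrix.adjugate_fin_two, Matrix.trace_fin_two, Matrix.mul_apply, Fin.sum_univ_two,
    det_fin_four, entries, Matrix.of_apply, Matrix.cons_val', Matrix.cons_val]
  ring

lemma str_mul_fromBlocks_zero {r : ℕ} (A A' B B' M M' N N' : Matrix (Fin r) (Fin r) R4) :
    str (Matrix.fromBlocks 0 A A' 0 * Matrix.fromBlocks 0 B B' 0 * Matrix.fromBlocks 0 M M' 0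
        * Matrix.fromBlocks 0 N N' 0)
      = (A * B' * M * N').trace - (A' * B * M' * N).trace := by
  simp [str, Matrix.fromBlocks_multiply]

lemma pd_fromBlocks_zero {r : ℕ} (i : Fin 4) (A B : Matrix (Fin r) (Fin r) R4) :
    pd i (Matrix.fromBlocks 0 A B 0) = Matrix.fromBlocks 0 (pd i A) (pd i B) 0 := by
  have pd_zero : (0 : Matrix (Fin r) (Fin r) R4).map (fun p => pderiv i p) = 0 :=
    Matrix.map_zero _ (map_zero _)
  simp only [pd, Matrix.fromBlocks_map, pd_zero]

lemma pd_adjugate (i : Fin 4) (M : Matrix (Fin 2) (Fin 2) R4) :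
    pd i M.adjugate = (pd i M).adjugate := by
  ext k l
  fin_cases k <;> fin_cases l <;> simp [pd, Matrix.adjugate_fin_two]

lemma str_pd_fromBlocks_adjugate (M : Matrix (Fin 2) (Fin 2) R4) :
    str (pd 0 (Matrix.fromBlocks 0 M M.adjugate 0) * pd 1 (Matrix.fromBlocks 0 M M.adjugate 0)
        * pd 2 (Matrix.fromBlocks 0 M M.adjugate 0) * pd 3 (Matrix.fromBlocks 0 M M.adjugate 0))
      = -(jacobianMatrix (entries M)).det := by
  have rows : Matrix.of ![entries (pd 0 M), entries (pd 1 M), entries (pd 2 M), entries (pd 3 M)]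
      = jacobianMatrix (entries M) := by
    ext i j
    fin_cases i <;> fin_cases j <;> rfl
  simp only [pd_fromBlocks_zero, str_mul_fromBlocks_zero, pd_adjugate,
    trace_mul_adjugate_sub_trace_adjugate_mul, rows]

end SupertraceIsJacobian

section Homogeneity

lemma isWeightedHomogeneous_det_jacobianMatrix {σ R G : Type*} [Fintype σ] [DecidableEq σ]
    [CommRing R] [AddCommGroup G] {w n : σ → G} {f : σ → MvPolynomial σ R}
    (hf : ∀ j, IsWeightedHomogeneous w (f j) (n j)) :
    IsWeightedHomogeneous w (jacobianMatrix f).det (∑ j, n j - ∑ i, w i) := by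
  rw [Matrix.det_apply']
  refine .sum _ _ _ fun τ _ => ?_
  have entry (j : σ) : IsWeightedHomogeneous w (jacobianMatrix f (τ j) j) (n j - w (τ j)) :=
    (hf j).pderiv (sub_add_cancel _ _)
  have product := IsWeightedHomogeneous.prod Finset.univ _ _ fun j _ => entry j
  rw [Finset.sum_sub_distrib, Equiv.sum_comp τ w] at product
  simpa only [map_intCast] using product.C_mul ((Equiv.Perm.sign τ : ℤ) : R)

lemma eval_eq_coeff_mul_prod {σ R : Type*} [Fintype σ] [CommSemiring R] {p : MvPolynomial σ R}
    {z : σ → R} {d : σ →₀ ℕ}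
    (h : ∀ e ∈ p.support, (∀ i, z i = 0 → e i = 0) → e = d) :
    eval z p = coeff d p * ∏ i, z i ^ d i := by
  rw [eval_eq', Finset.sum_eq_single d]
  · intro e he hne
    obtain ⟨i, hz, hi⟩ : ∃ i, z i = 0 ∧ e i ≠ 0 := by
      by_contra! hall
      exact hne (h e he hall)
    rw [Finset.prod_eq_zero (Finset.mem_univ i) (by rw [hz, zero_pow hi]), mul_zero]
  · intro hd
    rw [notMem_support_iff.mp hd, zero_mul]

/-- The weights of `u, v, x, y` making `x³ + y⁴ - u¹² - v²` homogeneous of weight `12`. They are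
integers so that no subtraction is truncated when a partial derivative lowers the weight. -/
def weightE6 : Fin 4 → ℤ := ![1, 6, 4, 3]

lemma weight_weightE6 (d : Fin 4 →₀ ℕ) :
    Finsupp.weight weightE6 d = d 0 + 6 * d 1 + 4 * d 2 + 3 * d 3 := by
  simp [Finsupp.weight_eq_sum, Fin.sum_univ_four, weightE6, mul_comm]

lemma weight_weightE6_mon (a b c e : ℕ) :
    Finsupp.weight weightE6 (mon a b c e) = a + 6 * b + 4 * c + 3 * e := by
  simp [weight_weightE6, mon]

lemma eq_mon_iff {a b c e : ℕ} {d : Fin 4 →₀ ℕ} :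
    d = mon a b c e ↔ d 0 = a ∧ d 1 = b ∧ d 2 = c ∧ d 3 = e := by
  simp [Finsupp.ext_iff, Fin.forall_fin_succ, mon]

lemma coeff_mon_one_two {p : R4} (hp : IsWeightedHomogeneous weightE6 p 10) (a b : ℕ) :
    coeff (mon a b 1 2) p = if a = 0 ∧ b = 0 then eval ![0, 0, 1, 1] p else 0 := by
  split_ifs with h
  · obtain ⟨rfl, rfl⟩ := h
    rw [eval_eq_coeff_mul_prod (d := mon 0 0 1 2)]
    · simp [Fin.prod_univ_four, mon]
    · intro e he hz
      have weight_e := hp (mem_support_iff.mp he)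
      rw [weight_weightE6] at weight_e
      have e0 := hz 0 rfl
      have e1 := hz 1 rfl
      rw [eq_mon_iff]
      omega
  · refine hp.coeff_eq_zero _ fun weight_mon => h ?_
    rw [weight_weightE6_mon] at weight_mon
    omega

lemma coeff_mon_ten_zero {p : R4} (hp : IsWeightedHomogeneous weightE6 p 10) (c e : ℕ) :
    coeff (mon 10 0 c e) p = if c = 0 ∧ e = 0 then eval ![1, 0, 0, 0] p else 0 := by
  split_ifs with h
  · obtain ⟨rfl, rfl⟩ := h
    rw [eval_eq_coeff_mul_prod (d := mon 10 0 0 0)]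
    · simp [Fin.prod_univ_four, mon]
    · intro e he hz
      have weight_e := hp (mem_support_iff.mp he)
      rw [weight_weightE6] at weight_e
      have e1 := hz 1 rfl
      have e2 := hz 2 rfl
      have e3 := hz 3 rfl
      rw [eq_mon_iff]
      omega
  · refine hp.coeff_eq_zero _ fun weight_mon => h ?_
    rw [weight_weightE6_mon] at weight_mon
    omega

lemma isWeightedHomogeneous_entries_dE6 (s t : ℂ) (j : Fin 4) :
    IsWeightedHomogeneous weightE6 (entries (dE6 s t) j) (![6, 4, 8, 6] j) := by
  have hU : IsWeightedHomogeneous weightE6 (C s * u) 1 := (isWeightedHomogeneous_X ℂ _ 0).C_mul s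
  have hv : IsWeightedHomogeneous weightE6 v 6 := isWeightedHomogeneous_X ℂ _ 1
  have hx : IsWeightedHomogeneous weightE6 x 4 := isWeightedHomogeneous_X ℂ _ 2
  have hy : IsWeightedHomogeneous weightE6 y 3 := isWeightedHomogeneous_X ℂ _ 3
  fin_cases j
  · exact (((hy.pow 2).sub hv).add ((hx.C_mul _).mul (hU.pow 2))).add ((hU.pow 6).C_mul _)
  · exact (hx.neg.add (hy.mul hU)).add ((hU.pow 4).C_mul _)
  · exact ((((hx.pow 2).add ((hy.mul hx).mul hU)).add ((hx.C_mul _).mul (hU.pow 4))).add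
      ((hy.C_mul _).mul (hU.pow 5))).sub ((hU.pow 8).C_mul _)
  · exact (((hy.pow 2).add hv).add ((hx.C_mul _).mul (hU.pow 2))).add ((hU.pow 6).C_mul _)

end Homogeneity

section SupertraceE6

lemma SE6_eq_neg_det_jacobianMatrix (s t : ℂ) :
    SE6 s t = -(jacobianMatrix (entries (dE6 s t))).det :=
  str_pd_fromBlocks_adjugate _

lemma isWeightedHomogeneous_SE6 (s t : ℂ) : IsWeightedHomogeneous weightE6 (SE6 s t) 10 := by
  rw [SE6_eq_neg_det_jacobianMatrix]
  exact (isWeightedHomogeneous_det_jacobianMatrix (isWeightedHomogeneous_entries_dE6 s t)).neg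

lemma eval_SE6 (s t : ℂ) (z : Fin 4 → ℂ) :
    eval z (SE6 s t) = -((jacobianMatrix (entries (dE6 s t))).map (eval z)).det := by
  rw [SE6_eq_neg_det_jacobianMatrix, map_neg, RingHom.map_det, RingHom.mapMatrix_apply]

lemma jacobianMatrix_dE6_map_eval_zero_zero_one_one (s t : ℂ) :
    (jacobianMatrix (entries (dE6 s t))).map (eval ![0, 0, 1, 1])
      = !![ 0,  s, s, 0;
           -1,  0, 0, 1;
            0, -1, 2, 0;
            2,  0, 0, 2] := by
  ext i j
  fin_cases i <;> fin_cases j <;> simp [jacobianMatrix, entries, dE6, u, v, x, y]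

lemma jacobianMatrix_dE6_map_eval_one_zero_zero_zero (s t : ℂ) :
    (jacobianMatrix (entries (dE6 s t))).map (eval ![1, 0, 0, 0])
      = !![3 * (2 * t + 1) / 4 * s ^ 6, (t + 1) * s ^ 4, -(9 * t + 5) / 6 * s ^ 8,
              3 * (2 * t + 1) / 4 * s ^ 6;
           -1, 0, 0, 1;
           s ^ 2 / 2, -1, t / 4 * s ^ 4, s ^ 2 / 2;
           0, s, (2 * t + 1) / 4 * s ^ 5, 0] := by
  ext i j
  fin_cases i <;> fin_cases j <;>
    simp [jacobianMatrix, entries, dE6, u, v, x, y] <;> ring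

lemma eval_SE6_zero_zero_one_one (s t : ℂ) : eval ![0, 0, 1, 1] (SE6 s t) = -12 * s := by
  rw [eval_SE6, jacobianMatrix_dE6_map_eval_zero_zero_one_one]
  simp only [det_fin_four, Matrix.of_apply, Matrix.cons_val', Matrix.cons_val]
  ring

lemma eval_SE6_one_zero_zero_zero {t : ℂ} (s : ℂ) (ht : t ^ 2 = 1 / 3) :
    eval ![1, 0, 0, 0] (SE6 s t) = (33 * t + 19) / 8 * s ^ 11 := by
  rw [eval_SE6, jacobianMatrix_dE6_map_eval_one_zero_zero_zero]
  simp only [det_fin_four, Matrix.of_apply, Matrix.cons_val', Matrix.cons_val]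
  linear_combination 11 / 4 * s ^ 11 * ht

end SupertraceE6

section Parameters

variable {s t : ℂ}

lemma one_sub_ne_zero_of_sq_eq (ht : t ^ 2 = 1 / 3) : 1 - t ≠ 0 := by
  intro h
  rw [← sub_eq_zero.mp h] at ht
  norm_num at ht

lemma ne_zero_of_pow_twelve_eq (ht : t ^ 2 = 1 / 3) (hs : s ^ 12 = -576 * (26 * t - 15)) :
    s ≠ 0 := by
  rintro rfl
  have t_eq : t = 15 / 26 := by linear_combination (1 / 14976 : ℂ) * hs
  rw [t_eq] at ht
  norm_num at ht

lemma mul_pow_eleven_eq_neg_div (ht : t ^ 2 = 1 / 3) (hs : s ^ 12 = -576 * (26 * t - 15)) :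
    (33 * t + 19) / 8 * s ^ 11 = -72 * (1 - t) / s := by
  have product_eq : (26 * t - 15) * (33 * t + 19) = 1 - t := by linear_combination 858 * ht
  rw [eq_div_iff (ne_zero_of_pow_twelve_eq ht hs)]
  linear_combination (33 * t + 19) / 8 * hs - 72 * product_eq

end Parameters

theorem stmt3 (s t : ℂ) (ht : t ^ 2 = 1/3) (hs : s ^ 12 = -576 * (26 * t - 15)) :
    s ≠ 0 ∧ 1 - t ≠ 0 ∧
    (∀ a' b' : ℕ, coeff (mon a' b' 1 2) (SE6 s t)
        = if a' = 0 ∧ b' = 0 then -12 * s else 0) ∧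
    (∀ c' e' : ℕ, coeff (mon 10 0 c' e') (SE6 s t)
        = if c' = 0 ∧ e' = 0 then -72 * (1 - t) / s else 0) ∧
    -(1/12 : ℂ) * coeff (mon 0 0 1 2) (SE6 s t) = s ∧
    -(1/24 : ℂ) * coeff (mon 10 0 0 0) (SE6 s t) = 3 * (1 - t) / s ∧
    3 * (1 - t) / s ≠ 0 := by
  have hs0 := ne_zero_of_pow_twelve_eq ht hs
  have ht1 := one_sub_ne_zero_of_sq_eq ht
  have left (a b : ℕ) : coeff (mon a b 1 2) (SE6 s t) = if a = 0 ∧ b = 0 then -12 * s else 0 := by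
    rw [coeff_mon_one_two (isWeightedHomogeneous_SE6 s t), eval_SE6_zero_zero_one_one]
  have right (c e : ℕ) : coeff (mon 10 0 c e) (SE6 s t)
      = if c = 0 ∧ e = 0 then -72 * (1 - t) / s else 0 := by
    rw [coeff_mon_ten_zero (isWeightedHomogeneous_SE6 s t), eval_SE6_one_zero_zero_zero s ht,
      mul_pow_eleven_eq_neg_div ht hs]
  refine ⟨hs0, ht1, left, right, ?_, ?_, div_ne_zero (mul_ne_zero three_ne_zero ht1) hs0⟩
  · rw [left, if_pos ⟨rfl, rfl⟩]
    ring
  · rw [right, if_pos ⟨rfl, rfl⟩]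
    ring
end
end

section
/- Let f = x³ + y⁴ − u^{12} − v² ∈ R = ℂ[u,v,x,y]. Let (d⁰, d¹) be a pair of 2×2 matrices over R with d¹·d⁰ = f·1 and d⁰·d¹ = f·1, and suppose: (grading) there exist rational numbers α₁, α₂, β₁, β₂ such that for all i, j the (i,j) entry of d¹ is weighted homogeneous of degree 1 + α_j − β_i and the (i,j) entry of d⁰ is weighted homogeneous of degree 1 + β_j − α_i, for the weights w(u) = 1/6, w(v) = 1, w(x) = 2/3, w(y) = 1/2; (boundary) substituting u = 0 gives d¹|_{u=0} = [[y² − v, −x], [x², y² + v]] and d⁰|_{u=0} = [[y² + v, x], [−x², y² − v]]; (non-degeneracy) writing d = [[0, d¹], [d⁰, 0]] and S = str(∂_u d · ∂_v d · ∂_x d · ∂_y d), both the coefficient of x¹y² (in the variables x, y) of S and the coefficient of u^{10}v⁰ (in the variables u, v) of S are non-zero, i.e. both quantum dimensions are non-zero. Then there exist s, t ∈ ℂ with t² = 1/3 and s^{12} = −576(26t − 15), and invertible 2×2 matrices P, Q over R, such that P·d¹·Q equals the matrix [[y² − v + (1/2)x(su)² + ((2t+1)/8)(su)⁶, −x + y(su)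 + ((t+1)/4)(su)⁴], [x² + yx(su) + (t/4)x(su)⁴ + ((2t+1)/4)y(su)⁵ − ((9t+5)/48)(su)⁸, y² + v + (1/2)x(su)² + ((2t+1)/8)(su)⁶]]. -/
/-!
Since `f` is prime, `d¹ d⁰ = f` forces `det d¹` to be a unit times a power of `f`, and the value at
`u = 0` leaves only `det d¹ = f`, so that `d⁰` is the adjugate of `d¹`. The grading and the value at
`u = 0` allow finitely many monomials in each entry of `d¹`; adding multiples of `u²` times the
first row and the second column removes the terms `u²y²` and `u²v` of the lower left entry.
Comparing coefficients in `det d¹ = f` then expresses all remaining coefficients through those of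
`uy` and `u⁴` in the upper right entry, called `b₁` and `b₂`, and leaves two equations between `b₁`
and `b₂`. If `b₁ ≠ 0`, these equations are `t² = 1/3` and `s¹² = -576 (26 t - 15)` for `s = b₁` and
`t = 4 b₂ / b₁⁴ - 1`. If `b₁ = 0`, all entries of `d` are even in `y`. The supertrace contains
exactly one derivative with respect to `y`, so it is odd in `y` and the left quantum dimension
vanishes.
-/

open MvPolynomial

noncomputable section

/-- The substitution `u ↦ 0` (keeping `v, x, y`). -/
def setU0 : R4 →ₐ[ℂ] R4 := aeval fun i => if i = 0 then 0 else X i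

open Matrix

/-- The potential `f = W - V` that is factorised. -/
def potential : R4 := x ^ 3 + y ^ 4 - u ^ 12 - v ^ 2

section Monomials

@[simp]
lemma mon_apply (a b c e : ℕ) (i : Fin 4) : mon a b c e i = ![a, b, c, e] i := by
  fin_cases i <;> simp [mon]

lemma mon_inj {a b c e a' b' c' e' : ℕ} :
    mon a b c e = mon a' b' c' e' ↔ a = a' ∧ b = b' ∧ c = c' ∧ e = e' := by
  simp [Finsupp.ext_iff, Fin.forall_fin_succ]

lemma eq_mon (m : Fin 4 →₀ ℕ) : m = mon (m 0) (m 1) (m 2) (m 3) := by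
  ext i
  fin_cases i <;> simp

lemma monomial_mon (a b c e : ℕ) (k : ℂ) :
    monomial (mon a b c e) k = C k * (u ^ a * v ^ b * x ^ c * y ^ e) := by
  simp only [u, v, x, y, X_pow_eq_monomial, monomial_mul, C_mul_monomial, mon, mul_one]

lemma coeff_monomial_mon (a b c e a' b' c' e' : ℕ) (k : ℂ) :
    coeff (mon a' b' c' e') (monomial (mon a b c e) k) =
      if a = a' ∧ b = b' ∧ c = c' ∧ e = e' then k else 0 := by
  simp only [coeff_monomial, mon_inj]

lemma eq_sum_monomial_of_support_subset {σ R : Type*} [CommSemiring R] {p : MvPolynomial σ R}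
    {S : Finset (σ →₀ ℕ)} (h : p.support ⊆ S) : p = ∑ m ∈ S, monomial m (coeff m p) := by
  conv_lhs => rw [p.as_sum]
  refine Finset.sum_subset h fun m _ hm => ?_
  rw [notMem_support_iff.mp hm, monomial_zero]

lemma setU0_monomial_mon (a b c e : ℕ) (k : ℂ) :
    setU0 (monomial (mon a b c e) k) = if a = 0 then monomial (mon a b c e) k else 0 := by
  rcases eq_or_ne a 0 with rfl | ha
  · simp [monomial_mon, setU0, u, v, x, y, algHom_C]
  · simp [monomial_mon, setU0, u, ha]

lemma coeff_setU0 (b c e : ℕ) (p : R4) :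
    coeff (mon 0 b c e) (setU0 p) = coeff (mon 0 b c e) p := by
  induction p using MvPolynomial.induction_on' with
  | monomial m k =>
    rw [eq_mon m, setU0_monomial_mon]
    split_ifs with h
    · rfl
    · rw [coeff_monomial_mon, if_neg fun h' => h h'.1, coeff_zero]
  | add p q hp hq => simp only [map_add, coeff_add, hp, hq]

end Monomials

section HomogeneousEntries

/-- Weights are multiplied by 6 to make them integral. -/
lemma WHom.weight_eq {q : ℚ} {p : R4} (h : WHom ![1 / 6, 1, 2 / 3, 1 / 2] q p) {m m' : Fin 4 →₀ ℕ}
    (hm : coeff m p ≠ 0) (hm' : coeff m' p ≠ 0) :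
    m 0 + 6 * m 1 + 4 * m 2 + 3 * m 3 = m' 0 + 6 * m' 1 + 4 * m' 2 + 3 * m' 3 := by
  have hq := (h m (mem_support_iff.mpr hm)).trans (h m' (mem_support_iff.mpr hm')).symm
  simp only [Fin.sum_univ_four, cons_val] at hq
  have hq' : (m 0 + 6 * m 1 + 4 * m 2 + 3 * m 3 : ℚ)
      = m' 0 + 6 * m' 1 + 4 * m' 2 + 3 * m' 3 := by linarith
  exact_mod_cast hq'

variable {q : ℚ} {p : R4} {ε : ℂ}

lemma WHom.exists_eq_of_setU0_eq_C_mul_x (h : WHom ![1 / 6, 1, 2 / 3, 1 / 2] q p) (hε : ε ≠ 0)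
    (hp : setU0 p = C ε * x) :
    ∃ b₁ b₂ : ℂ, p = C ε * x + C b₁ * y * u + C b₂ * u ^ 4 := by
  have hx : coeff (mon 0 0 1 0) p = ε := by
    have hbd : C ε * x = monomial (mon 0 0 1 0) ε := by simp [monomial_mon]
    simp [← coeff_setU0, hp, hbd]
  have hsupp : p.support ⊆ {mon 0 0 1 0, mon 1 0 0 1, mon 4 0 0 0} := by
    intro m hm
    have hw := h.weight_eq (mem_support_iff.mp hm) (hx.trans_ne hε)
    rw [eq_mon m]
    simp only [mon_apply, cons_val, Finset.mem_insert, Finset.mem_singleton, mon_inj] at hw ⊢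
    generalize m 0 = a, m 1 = b, m 2 = c, m 3 = e at hw ⊢
    obtain rfl : b = 0 := by lia
    have hc : c ≤ 1 := by lia
    have he : e ≤ 1 := by lia
    interval_cases c <;> interval_cases e <;> lia
  refine ⟨coeff (mon 1 0 0 1) p, coeff (mon 4 0 0 0) p, ?_⟩
  conv_lhs => rw [eq_sum_monomial_of_support_subset hsupp]
  repeat rw [Finset.sum_insert (by simp [mon_inj])]
  simp only [Finset.sum_singleton, hx, monomial_mon]
  ring

lemma WHom.exists_eq_of_setU0_eq_sq_y_add_C_mul_v (h : WHom ![1 / 6, 1, 2 / 3, 1 / 2] q p)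
    (hp : setU0 p = y ^ 2 + C ε * v) :
    ∃ a : Fin 3 → ℂ, p = y ^ 2 + C ε * v + C (a 0) * x * u ^ 2 + C (a 1) * y * u ^ 3
      + C (a 2) * u ^ 6 := by
  have hbd : y ^ 2 + C ε * v = monomial (mon 0 0 0 2) 1 + monomial (mon 0 1 0 0) ε := by
    simp [monomial_mon]
  have hy : coeff (mon 0 0 0 2) p = 1 := by
    simp [← coeff_setU0, hp, hbd, mon_inj]
  have hv : coeff (mon 0 1 0 0) p = ε := by
    simp [← coeff_setU0, hp, hbd, mon_inj]
  have hsupp : p.support ⊆ {mon 0 0 0 2, mon 0 1 0 0, mon 2 0 1 0, mon 3 0 0 1, mon 6 0 0 0} := by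
    intro m hm
    have hw := h.weight_eq (mem_support_iff.mp hm) (hy.trans_ne one_ne_zero)
    rw [eq_mon m]
    simp only [mon_apply, cons_val, Finset.mem_insert, Finset.mem_singleton, mon_inj] at hw ⊢
    generalize m 0 = a, m 1 = b, m 2 = c, m 3 = e at hw ⊢
    have hb : b ≤ 1 := by lia
    have hc : c ≤ 1 := by lia
    have he : e ≤ 2 := by lia
    interval_cases b <;> interval_cases c <;> interval_cases e <;> lia
  refine ⟨![coeff (mon 2 0 1 0) p, coeff (mon 3 0 0 1) p, coeff (mon 6 0 0 0) p], ?_⟩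
  conv_lhs => rw [eq_sum_monomial_of_support_subset hsupp]
  repeat rw [Finset.sum_insert (by simp [mon_inj])]
  simp only [Finset.sum_singleton, hy, hv, monomial_mon, C_1, cons_val]
  ring

lemma WHom.exists_eq_of_setU0_eq_sq_x (h : WHom ![1 / 6, 1, 2 / 3, 1 / 2] q p)
    (hp : setU0 p = x ^ 2) :
    ∃ (c : Fin 4 → ℂ) (g₁ g₂ : ℂ), p = x ^ 2 + C (c 0) * x * y * u + C (c 1) * x * u ^ 4
        + C (c 2) * y * u ^ 5 + C (c 3) * u ^ 8 + C g₁ * y ^ 2 * u ^ 2 + C g₂ * v * u ^ 2 := by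
  have hx : coeff (mon 0 0 2 0) p = 1 := by
    have hbd : x ^ 2 = monomial (mon 0 0 2 0) 1 := by simp [monomial_mon]
    simp [← coeff_setU0, hp, hbd]
  have hsupp : p.support ⊆ {mon 0 0 2 0, mon 1 0 1 1, mon 4 0 1 0, mon 5 0 0 1, mon 8 0 0 0,
      mon 2 0 0 2, mon 2 1 0 0} := by
    intro m hm
    have hw := h.weight_eq (mem_support_iff.mp hm) (hx.trans_ne one_ne_zero)
    rw [eq_mon m]
    simp only [mon_apply, cons_val, Finset.mem_insert, Finset.mem_singleton, mon_inj] at hw ⊢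
    generalize m 0 = a, m 1 = b, m 2 = c, m 3 = e at hw ⊢
    have hb : b ≤ 1 := by lia
    have hc : c ≤ 2 := by lia
    have he : e ≤ 2 := by lia
    interval_cases b <;> interval_cases c <;> interval_cases e <;> lia
  refine ⟨![coeff (mon 1 0 1 1) p, coeff (mon 4 0 1 0) p, coeff (mon 5 0 0 1) p,
    coeff (mon 8 0 0 0) p], coeff (mon 2 0 0 2) p, coeff (mon 2 1 0 0) p, ?_⟩
  conv_lhs => rw [eq_sum_monomial_of_support_subset hsupp]
  repeat rw [Finset.sum_insert (by simp [mon_inj])]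
  simp only [Finset.sum_singleton, hx, monomial_mon, C_1, cons_val]
  ring

end HomogeneousEntries

section Determinant

lemma irreducible_X_sq_sub_C {A : Type*} [CommRing A] [IsDomain A] {c : A} (hc : ¬IsSquare c) :
    Irreducible (Polynomial.X ^ 2 - Polynomial.C c) := by
  have hdeg : (Polynomial.X ^ 2 - Polynomial.C c).natDegree = 2 :=
    Polynomial.natDegree_X_pow_sub_C
  rw [(Polynomial.monic_X_pow_sub_C c two_ne_zero).irreducible_iff_roots_eq_zero_of_degree_le_three
    hdeg.ge (by lia), Multiset.eq_zero_iff_forall_notMem]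
  intro a ha
  have hroot := Polynomial.isRoot_of_mem_roots ha
  simp only [Polynomial.IsRoot.def, Polynomial.eval_sub, Polynomial.eval_pow, Polynomial.eval_X,
    Polynomial.eval_C, sub_eq_zero] at hroot
  exact hc ⟨a, by rw [← hroot, sq]⟩

lemma not_isSquare_X_pow {A : Type*} [CommRing A] [IsDomain A] {n : ℕ} (hn : Odd n) :
    ¬IsSquare (Polynomial.X ^ n : Polynomial A) := by
  rintro ⟨r, hr⟩
  have hdeg : n = 2 * r.natDegree := by
    rw [← Polynomial.natDegree_pow, sq, ← hr, Polynomial.natDegree_X_pow]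
  exact Nat.not_even_iff_odd.mpr hn (hdeg ▸ even_two_mul _)

lemma prime_potential : Prime potential := by
  let e : R4 ≃ₐ[ℂ] Polynomial (MvPolynomial (Fin 3) ℂ) :=
    (renameEquiv ℂ (Equiv.swap 0 1)).trans (finSuccEquiv ℂ 3)
  let c : MvPolynomial (Fin 3) ℂ := X 1 ^ 3 + X 2 ^ 4 - X 0 ^ 12
  have hc : ¬IsSquare c := by
    intro h
    refine not_isSquare_X_pow (A := ℂ) (n := 3) (by decide) ?_
    simpa [c] using h.map
      (aeval ![0, Polynomial.X, 0] : MvPolynomial (Fin 3) ℂ →ₐ[ℂ] Polynomial ℂ)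
  have he : e potential = -(Polynomial.X ^ 2 - Polynomial.C c) := by
    have hu : e u = Polynomial.C (X 0) := by
      simpa [e, u] using finSuccEquiv_X_succ (R := ℂ) (j := (0 : Fin 3))
    have hv : e v = Polynomial.X := by
      simpa [e, v] using finSuccEquiv_X_zero (R := ℂ) (n := 3)
    have hx : e x = Polynomial.C (X 1) := by
      simpa [e, x, Equiv.swap_apply_of_ne_of_ne] using
        finSuccEquiv_X_succ (R := ℂ) (j := (1 : Fin 3))
    have hy : e y = Polynomial.C (X 2) := by
      simpa [e, y, Equiv.swap_apply_of_ne_of_ne] using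
        finSuccEquiv_X_succ (R := ℂ) (j := (2 : Fin 3))
    simp [potential, hu, hv, hx, hy, c]
  rw [← MulEquiv.prime_iff e, he]
  exact (irreducible_X_sq_sub_C hc).prime.neg

lemma det_eq_potential {d0 d1 : Matrix (Fin 2) (Fin 2) R4}
    (hmf : d1 * d0 = potential • (1 : Matrix (Fin 2) (Fin 2) R4))
    (hbd : d1.map setU0 = !![y ^ 2 - v, -x; x ^ 2, y ^ 2 + v]) : d1.det = potential := by
  have hdvd : d1.det ∣ potential ^ 2 := by
    refine ⟨d0.det, ?_⟩
    rw [← det_mul, hmf, det_smul, det_one, mul_one, Fintype.card_fin]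
  obtain ⟨i, hi, hassoc⟩ := (dvd_prime_pow prime_potential 2).mp hdvd
  obtain ⟨k, hk⟩ := hassoc.symm
  obtain ⟨r, -, hr⟩ := isUnit_iff_eq_C_of_isReduced.mp k.isUnit
  have hdet : setU0 d1.det = x ^ 3 + y ^ 4 - v ^ 2 := by
    rw [AlgHom.map_det, AlgHom.mapMatrix_apply, hbd, det_fin_two_of]
    ring
  have hfactor : x ^ 3 + y ^ 4 - v ^ 2 = setU0 potential ^ i * C r := by
    rw [← hdet, ← hk, hr, map_mul, map_pow, setU0, algHom_C, algebraMap_eq]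
  have heval (z : ℂ) : z ^ 3 = (z ^ 3) ^ i * r := by
    simpa [potential, setU0, u, v, x, y] using
      congrArg (aeval ![0, 0, z, 0] : R4 →ₐ[ℂ] ℂ) hfactor
  have hr1 : r = 1 := by simpa using (heval 1).symm
  have hi1 : i = 1 := by
    have h8 := heval 2
    rw [hr1] at h8
    interval_cases i
    · norm_num at h8
    · rfl
    · norm_num at h8
  rw [← hk, hr, hr1, hi1, pow_one, C_1, mul_one]

lemma eq_adjugate_of_mul_eq_det_smul_one {n A : Type*} [Fintype n] [DecidableEq n] [CommRing A]
    [IsDomain A] {M N : Matrix n n A} (hM : M.det ≠ 0) (h : M * N = M.det • 1) :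
    N = M.adjugate := by
  refine smul_right_injective _ hM ?_
  calc M.det • N = M.adjugate * (M * N) := by rw [← Matrix.mul_assoc, adjugate_mul, smul_one_mul]
    _ = M.det • M.adjugate := by rw [h, Matrix.mul_smul, Matrix.mul_one]

end Determinant

section Transvections

lemma eq_of_transvection_mul_mul_transvection_eq {n A : Type*} [Fintype n] [DecidableEq n]
    [CommRing A] {i j : n} (hij : i ≠ j) {p q : A} {M N : Matrix n n A}
    (h : transvection i j p * M * transvection i j q = N) :
    M = transvection i j (-p) * N * transvection i j (-q) := by
  have hleft : transvection i j (-p) * transvection i j p = 1 := by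
    rw [transvection_mul_transvection_same i j hij, neg_add_cancel, transvection_zero]
  have hright : transvection i j q * transvection i j (-q) = 1 := by
    rw [transvection_mul_transvection_same i j hij, add_neg_cancel, transvection_zero]
  rw [← h, ← Matrix.mul_assoc, ← Matrix.mul_assoc, hleft, Matrix.one_mul, Matrix.mul_assoc, hright,
    Matrix.mul_one]

lemma isUnit_transvection {n A : Type*} [Fintype n] [DecidableEq n] [CommRing A] {i j : n}
    (hij : i ≠ j) (p : A) : IsUnit (transvection i j p) := by
  rw [isUnit_iff_isUnit_det, det_transvection_of_ne i j hij]
  exact isUnit_one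

lemma transvection_mul_mul_transvection_fin_two {A : Type*} [CommRing A] (a b c d p q : A) :
    transvection 1 0 p * !![a, b; c, d] * transvection 1 0 q
      = !![a + b * q, b; p * a + c + (p * b + d) * q, p * b + d] := by
  have htrans (p : A) : transvection 1 0 p = !![1, 0; p, 1] := by
    ext i j
    fin_cases i <;> fin_cases j <;> simp [transvection]
  simp [htrans]

end Transvections

section NormalForm

/-- The general matrix of weighted homogeneous polynomials that restricts to the boundary value of
`d¹` at `u = 0`. The parameters `a` and `d` belong to the diagonal, `b₁` and `b₂` to the upper right
entry, and `c`, `g₁`, `g₂` to the lower left one, where `g₁` and `g₂` are the coefficients that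
elementary operations can remove. -/
def homogeneousFactor (a d : Fin 3 → ℂ) (b₁ b₂ : ℂ) (c : Fin 4 → ℂ) (g₁ g₂ : ℂ) :
    Matrix (Fin 2) (Fin 2) R4 :=
  !![y ^ 2 - v + C (a 0) * x * u ^ 2 + C (a 1) * y * u ^ 3 + C (a 2) * u ^ 6,
     -x + C b₁ * y * u + C b₂ * u ^ 4;
     x ^ 2 + C (c 0) * x * y * u + C (c 1) * x * u ^ 4 + C (c 2) * y * u ^ 5 + C (c 3) * u ^ 8
       + C g₁ * y ^ 2 * u ^ 2 + C g₂ * v * u ^ 2,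
     y ^ 2 + v + C (d 0) * x * u ^ 2 + C (d 1) * y * u ^ 3 + C (d 2) * u ^ 6]

/-- The two-parameter family to which elementary operations reduce `d¹`. The coefficients solve the
triangular part of the system `det d¹ = f`; the monomials `u⁹y` and `u¹²` impose two further
equations on `b₁` and `b₂`. -/
def normalForm (b₁ b₂ : ℂ) : Matrix (Fin 2) (Fin 2) R4 :=
  homogeneousFactor ![b₁ ^ 2 / 2, 0, b₁ ^ 2 * b₂ - b₁ ^ 6 / 8]
    ![b₁ ^ 2 / 2, 0, b₁ ^ 2 * b₂ - b₁ ^ 6 / 8] b₁ b₂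
    ![b₁, b₂ - b₁ ^ 4 / 4, 2 * b₁ * b₂ - b₁ ^ 5 / 4,
      b₂ ^ 2 - 5 / 4 * b₁ ^ 4 * b₂ + b₁ ^ 8 / 8] 0 0

lemma exists_eq_homogeneousFactor {d1 : Matrix (Fin 2) (Fin 2) R4}
    (hgr : ∀ i j, ∃ q, WHom ![1 / 6, 1, 2 / 3, 1 / 2] q (d1 i j))
    (hbd : d1.map setU0 = !![y ^ 2 - v, -x; x ^ 2, y ^ 2 + v]) :
    ∃ a d b₁ b₂ c g₁ g₂, d1 = homogeneousFactor a d b₁ b₂ c g₁ g₂ := by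
  have hentry : ∀ i j, setU0 (d1 i j) = _ := fun i j => congrFun₂ hbd i j
  choose q hq using hgr
  obtain ⟨a, ha⟩ := (hq 0 0).exists_eq_of_setU0_eq_sq_y_add_C_mul_v (ε := -1)
    (by simp [hentry, sub_eq_add_neg])
  obtain ⟨d, hd⟩ := (hq 1 1).exists_eq_of_setU0_eq_sq_y_add_C_mul_v (ε := 1) (by simp [hentry])
  obtain ⟨b₁, b₂, hb⟩ := (hq 0 1).exists_eq_of_setU0_eq_C_mul_x (ε := -1) (by simp)
    (by simp [hentry])
  obtain ⟨c, g₁, g₂, hc⟩ := (hq 1 0).exists_eq_of_setU0_eq_sq_x (by simp [hentry])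
  refine ⟨a, d, b₁, b₂, c, g₁, g₂, ?_⟩
  rw [eta_fin_two d1, ha, hb, hc, hd, homogeneousFactor]
  simp [sub_eq_add_neg]

lemma exists_transvection_mul_homogeneousFactor_eq (a d : Fin 3 → ℂ) (b₁ b₂ : ℂ) (c : Fin 4 → ℂ)
    (g₁ g₂ : ℂ) : ∃ (l m : ℂ) (a' d' : Fin 3 → ℂ) (c' : Fin 4 → ℂ),
      transvection 1 0 (C l * u ^ 2) * homogeneousFactor a d b₁ b₂ c g₁ g₂
        * transvection 1 0 (C m * u ^ 2) = homogeneousFactor a' d' b₁ b₂ c' 0 0 := by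
  obtain ⟨l, m, hl, hm⟩ : ∃ l m : ℂ, g₁ = -l - m ∧ g₂ = l - m :=
    ⟨(g₂ - g₁) / 2, -(g₁ + g₂) / 2, by ring, by ring⟩
  refine ⟨l, m, ![a 0 - m, a 1 + m * b₁, a 2 + m * b₂], ![d 0 - l, d 1 + l * b₁, d 2 + l * b₂],
    ![c 0, c 1 + l * a 0 + m * d 0 - l * m, c 2 + l * a 1 + m * d 1 + l * m * b₁,
      c 3 + l * a 2 + m * d 2 + l * m * b₂], ?_⟩
  simp only [homogeneousFactor, transvection_mul_mul_transvection_fin_two, hl, hm, cons_val,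
    map_add, map_sub, map_mul, map_neg, map_zero]
  simp only [EmbeddingLike.apply_eq_iff_eq, vecCons_inj, and_true]
  and_intros <;> ring

lemma det_homogeneousFactor_sub_potential (a d : Fin 3 → ℂ) (b₁ b₂ : ℂ) (c : Fin 4 → ℂ) :
    (homogeneousFactor a d b₁ b₂ c 0 0).det - potential =
      monomial (mon 2 1 1 0) (a 0 - d 0) + monomial (mon 3 1 0 1) (a 1 - d 1)
      + monomial (mon 6 1 0 0) (a 2 - d 2) + monomial (mon 3 0 0 3) (a 1 + d 1)
      + monomial (mon 2 0 1 2) (a 0 + d 0 - b₁ * c 0)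
      + monomial (mon 6 0 0 2) (a 2 + d 2 + a 1 * d 1 - b₁ * c 2)
      + monomial (mon 1 0 2 1) (c 0 - b₁) + monomial (mon 4 0 2 0) (a 0 * d 0 + c 1 - b₂)
      + monomial (mon 5 0 1 1) (a 0 * d 1 + a 1 * d 0 + c 2 - b₁ * c 1 - b₂ * c 0)
      + monomial (mon 8 0 1 0) (a 0 * d 2 + a 2 * d 0 + c 3 - b₂ * c 1)
      + monomial (mon 9 0 0 1) (a 1 * d 2 + a 2 * d 1 - b₁ * c 3 - b₂ * c 2)
      + monomial (mon 12 0 0 0) (a 2 * d 2 - b₂ * c 3 + 1) := by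
  simp only [homogeneousFactor, potential, det_fin_two_of, monomial_mon, map_add, map_sub, map_mul,
    map_one, map_zero]
  ring

lemma homogeneousFactor_eq_normalForm {a d : Fin 3 → ℂ} {b₁ b₂ : ℂ} {c : Fin 4 → ℂ}
    (h : (homogeneousFactor a d b₁ b₂ c 0 0).det = potential) :
    homogeneousFactor a d b₁ b₂ c 0 0 = normalForm b₁ b₂ := by
  have hsum := (det_homogeneousFactor_sub_potential a d b₁ b₂ c).symm.trans (sub_eq_zero.mpr h)
  have hcoeff := fun i j k l => congrArg (coeff (mon i j k l)) hsum
  simp only [coeff_add, coeff_monomial_mon, coeff_zero] at hcoeff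
  have hd₀ : d 0 = a 0 := (sub_eq_zero.mp (by simpa using hcoeff 2 1 1 0)).symm
  have hd₁ : d 1 = a 1 := (sub_eq_zero.mp (by simpa using hcoeff 3 1 0 1)).symm
  have hd₂ : d 2 = a 2 := (sub_eq_zero.mp (by simpa using hcoeff 6 1 0 0)).symm
  have ha₁ : a 1 = 0 := by simpa [hd₁] using hcoeff 3 0 0 3
  have hc₀ : c 0 = b₁ := sub_eq_zero.mp (by simpa using hcoeff 1 0 2 1)
  have ha₀ : a 0 = b₁ ^ 2 / 2 := by
    have h₀ : a 0 + a 0 - b₁ * b₁ = 0 := by simpa [hd₀, hc₀] using hcoeff 2 0 1 2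
    linear_combination h₀ / 2
  have hc₁ : c 1 = b₂ - b₁ ^ 4 / 4 := by
    have h₁ : a 0 * a 0 + c 1 - b₂ = 0 := by simpa [hd₀] using hcoeff 4 0 2 0
    rw [ha₀] at h₁
    linear_combination h₁
  have hc₂ : c 2 = 2 * b₁ * b₂ - b₁ ^ 5 / 4 := by
    have h₂ : c 2 - b₁ * c 1 - b₂ * b₁ = 0 := by simpa [hd₁, ha₁, hc₀] using hcoeff 5 0 1 1
    rw [hc₁] at h₂
    linear_combination h₂
  have ha₂ : a 2 = b₁ ^ 2 * b₂ - b₁ ^ 6 / 8 := by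
    have h₂ : a 2 + a 2 - b₁ * c 2 = 0 := by simpa [hd₁, hd₂, ha₁] using hcoeff 6 0 0 2
    rw [hc₂] at h₂
    linear_combination h₂ / 2
  have hc₃ : c 3 = b₂ ^ 2 - 5 / 4 * b₁ ^ 4 * b₂ + b₁ ^ 8 / 8 := by
    have h₃ : a 0 * a 2 + a 2 * a 0 + c 3 - b₂ * c 1 = 0 := by
      simpa [hd₀, hd₂] using hcoeff 8 0 1 0
    rw [ha₀, ha₂, hc₁] at h₃
    linear_combination h₃
  simp only [normalForm, homogeneousFactor, hd₀, hd₁, hd₂, ha₀, ha₁, ha₂, hc₀, hc₁, hc₂, hc₃,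
    cons_val]

lemma exists_transvection_mul_eq_normalForm {d1 : Matrix (Fin 2) (Fin 2) R4}
    (hgr : ∀ i j, ∃ q, WHom ![1 / 6, 1, 2 / 3, 1 / 2] q (d1 i j))
    (hbd : d1.map setU0 = !![y ^ 2 - v, -x; x ^ 2, y ^ 2 + v]) (hdet : d1.det = potential) :
    ∃ l m b₁ b₂ : ℂ,
      transvection 1 0 (C l * u ^ 2) * d1 * transvection 1 0 (C m * u ^ 2) = normalForm b₁ b₂
        ∧ (normalForm b₁ b₂).det = potential := by
  obtain ⟨a, d, b₁, b₂, c, g₁, g₂, rfl⟩ := exists_eq_homogeneousFactor hgr hbd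
  obtain ⟨l, m, a', d', c', hred⟩ := exists_transvection_mul_homogeneousFactor_eq a d b₁ b₂ c g₁ g₂
  have hdet' : (homogeneousFactor a' d' b₁ b₂ c' 0 0).det = potential := by
    simp only [← hred, det_mul, hdet, det_transvection_of_ne (1 : Fin 2) 0 one_ne_zero, one_mul,
      mul_one]
  have hnormal := homogeneousFactor_eq_normalForm hdet'
  exact ⟨l, m, b₁, b₂, hred.trans hnormal, hnormal ▸ hdet'⟩

lemma normalForm_eq_dE6 {s t : ℂ} (ht : t ^ 2 = 1 / 3) :
    normalForm s ((t + 1) / 4 * s ^ 4) = dE6 s t := by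
  have h11 : s ^ 2 * ((t + 1) / 4 * s ^ 4) - s ^ 6 / 8 = (2 * t + 1) / 8 * s ^ 6 := by ring
  have hx : (t + 1) / 4 * s ^ 4 - s ^ 4 / 4 = t / 4 * s ^ 4 := by ring
  have hy : 2 * s * ((t + 1) / 4 * s ^ 4) - s ^ 5 / 4 = (2 * t + 1) / 4 * s ^ 5 := by ring
  have hu : ((t + 1) / 4 * s ^ 4) ^ 2 - 5 / 4 * s ^ 4 * ((t + 1) / 4 * s ^ 4) + s ^ 8 / 8
      = -((9 * t + 5) / 48 * s ^ 8) := by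
    linear_combination s ^ 8 / 16 * ht
  have h00 : s ^ 2 / 2 = 1 / 2 * s ^ 2 := by ring
  simp only [normalForm, homogeneousFactor, dE6, cons_val, h11, hx, hy, hu, h00, C_mul, C_pow,
    C_neg, C_0, zero_mul, add_zero]
  simp only [EmbeddingLike.apply_eq_iff_eq, vecCons_inj, and_true]
  refine ⟨⟨?_, ?_⟩, ?_, ?_⟩ <;> ring

lemma exists_parameter_of_det_normalForm_eq {b₁ b₂ : ℂ} (hb : b₁ ≠ 0)
    (hdet : (normalForm b₁ b₂).det = potential) :
    ∃ t : ℂ, t ^ 2 = 1 / 3 ∧ b₁ ^ 12 = -576 * (26 * t - 15) ∧ b₂ = (t + 1) / 4 * b₁ ^ 4 := by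
  have hsum := (det_homogeneousFactor_sub_potential _ _ b₁ b₂ _).symm.trans (sub_eq_zero.mpr hdet)
  have hcoeff := fun i j k l => congrArg (coeff (mon i j k l)) hsum
  simp only [coeff_add, coeff_monomial_mon, coeff_zero] at hcoeff
  have hy : -(b₁ * (b₂ ^ 2 - 5 / 4 * b₁ ^ 4 * b₂ + b₁ ^ 8 / 8))
      - b₂ * (2 * b₁ * b₂ - b₁ ^ 5 / 4) = 0 := by
    simpa using hcoeff 9 0 0 1
  have hu : (b₁ ^ 2 * b₂ - b₁ ^ 6 / 8) * (b₁ ^ 2 * b₂ - b₁ ^ 6 / 8)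
      - b₂ * (b₂ ^ 2 - 5 / 4 * b₁ ^ 4 * b₂ + b₁ ^ 8 / 8) + 1 = 0 := by
    simpa using hcoeff 12 0 0 0
  obtain ⟨t, rfl⟩ : ∃ t : ℂ, b₂ = (t + 1) / 4 * b₁ ^ 4 :=
    ⟨4 * b₂ / b₁ ^ 4 - 1, by field_simp; ring⟩
  have ht : t ^ 2 = 1 / 3 := by
    refine mul_left_cancel₀ (pow_ne_zero 9 hb) ?_
    linear_combination -16 / 3 * hy
  have hs : b₁ ^ 12 * (15 + 26 * t) = -192 := by
    linear_combination 192 * hu + (3 * t - 18) * b₁ ^ 12 * ht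
  -- The inverse of `15 + 26 t` is `-3 (15 - 26 t)` when `t ^ 2 = 1 / 3`.
  refine ⟨t, ht, ?_, rfl⟩
  linear_combination (-3 * (15 - 26 * t)) * hs - 2028 * b₁ ^ 12 * ht

end NormalForm

section Parity

section Grading

variable {M : Type*} [AddCommGroup M] {w : Fin 4 → M}

lemma isWeightedHomogeneous_matrix_mul {ι κ μ : Type*} [Fintype κ] {A : Matrix ι κ R4}
    {B : Matrix κ μ R4} {m n : M} (hA : ∀ i j, (A i j).IsWeightedHomogeneous w m)
    (hB : ∀ i j, (B i j).IsWeightedHomogeneous w n) (i : ι) (j : μ) :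
    ((A * B) i j).IsWeightedHomogeneous w (m + n) := by
  rw [mul_apply]
  exact Submodule.sum_mem (weightedHomogeneousSubmodule ℂ w (m + n))
    fun k _ => (hA i k).mul (hB k j)

lemma isWeightedHomogeneous_pd {ι κ : Type} {A : Matrix ι κ R4} {n : M}
    (hA : ∀ i j, (A i j).IsWeightedHomogeneous w n) (k : Fin 4) (i : ι) (j : κ) :
    (pd k A i j).IsWeightedHomogeneous w (n - w k) :=
  (hA i j).pderiv (sub_add_cancel n (w k))

lemma isWeightedHomogeneous_str {r : ℕ} {A : Matrix (Fin r ⊕ Fin r) (Fin r ⊕ Fin r) R4} {n : M}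
    (hA : ∀ i j, (A i j).IsWeightedHomogeneous w n) : (str A).IsWeightedHomogeneous w n :=
  Submodule.sub_mem (weightedHomogeneousSubmodule ℂ w n)
    (Submodule.sum_mem _ fun _ _ => hA _ _) (Submodule.sum_mem _ fun _ _ => hA _ _)

end Grading

/-- The `ZMod 2`-valued weights that grade `R` by the parity of the exponent of `y`, used to see
that the supertrace is odd in `y` when `d` is even. -/
def yParity : Fin 4 → ZMod 2 := ![0, 0, 0, 1]

/-- The subalgebra of polynomials that are even in `y`, in which the entries of `d` lie if `b₁ = 0`.
It is encoded as the part of degree zero for `yParity`. -/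
def evenInY : Subalgebra ℂ R4 :=
  haveI : SetLike.GradedMonoid (weightedHomogeneousSubmodule ℂ yParity) :=
    WeightedHomogeneousSubmodule.gradedMonoid
  SetLike.GradeZero.subalgebra (weightedHomogeneousSubmodule ℂ yParity)

lemma coeff_str_pd_eq_zero_of_mem_evenInY {r : ℕ} {A : Matrix (Fin r ⊕ Fin r) (Fin r ⊕ Fin r) R4}
    (hA : A ∈ evenInY.matrix) {m : Fin 4 →₀ ℕ} (hm : Even (m 3)) :
    coeff m (str (pd 0 A * pd 1 A * pd 2 A * pd 3 A)) = 0 := by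
  have heven (i j) : (A i j).IsWeightedHomogeneous yParity 0 := hA i j
  have hodd := isWeightedHomogeneous_str <| isWeightedHomogeneous_matrix_mul
    (isWeightedHomogeneous_matrix_mul (isWeightedHomogeneous_matrix_mul
      (isWeightedHomogeneous_pd heven 0) (isWeightedHomogeneous_pd heven 1))
      (isWeightedHomogeneous_pd heven 2)) (isWeightedHomogeneous_pd heven 3)
  refine hodd.coeff_eq_zero m ?_
  have hm' : ((m 3 : ℕ) : ZMod 2) = 0 := (ZMod.natCast_eq_zero_iff_even).mpr hm
  simp [Finsupp.weight_apply, Finsupp.sum_fintype, Fin.sum_univ_four, yParity, hm']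

lemma u_mem_evenInY : u ∈ evenInY := isWeightedHomogeneous_X ℂ yParity 0

lemma normalForm_zero_mem_matrix_evenInY (b₂ : ℂ) : normalForm 0 b₂ ∈ evenInY.matrix := by
  have hC (k : ℂ) : C k ∈ evenInY := evenInY.algebraMap_mem k
  have hv : v ∈ evenInY := isWeightedHomogeneous_X ℂ yParity 1
  have hx : x ∈ evenInY := isWeightedHomogeneous_X ℂ yParity 2
  have hy : y ^ 2 ∈ evenInY := (isWeightedHomogeneous_X ℂ yParity 3).pow 2
  have h00 : y ^ 2 - v ∈ evenInY := sub_mem hy hv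
  have h01 : -x + C b₂ * u ^ 4 ∈ evenInY :=
    add_mem (neg_mem hx) (mul_mem (hC _) (pow_mem u_mem_evenInY 4))
  have h10 : x ^ 2 + C b₂ * x * u ^ 4 + C (b₂ ^ 2) * u ^ 8 ∈ evenInY :=
    add_mem (add_mem (pow_mem hx 2) (mul_mem (mul_mem (hC _) hx) (pow_mem u_mem_evenInY 4)))
      (mul_mem (hC _) (pow_mem u_mem_evenInY 8))
  have h11 : y ^ 2 + v ∈ evenInY := add_mem hy hv
  intro i j
  fin_cases i <;> fin_cases j
  · simpa [normalForm, homogeneousFactor] using h00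
  · simpa [normalForm, homogeneousFactor] using h01
  · simpa [normalForm, homogeneousFactor] using h10
  · simpa [normalForm, homogeneousFactor] using h11

section SubalgebraMatrix

variable {ι K A : Type*} [Fintype ι] [DecidableEq ι] [CommRing K] [CommRing A] [Algebra K A]
  {S : Subalgebra K A}

lemma transvection_mem_matrix {p : A} (hp : p ∈ S) (i j : ι) : transvection i j p ∈ S.matrix := by
  refine add_mem (one_mem _) fun i' j' => ?_
  rw [single_apply]
  split_ifs
  exacts [hp, zero_mem S]

lemma adjugate_mem_matrix {M : Matrix ι ι A} (hM : M ∈ S.matrix) : M.adjugate ∈ S.matrix := by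
  let N : Matrix ι ι S := of fun i j => ⟨M i j, hM i j⟩
  have hN : M.adjugate = S.val.mapMatrix N.adjugate := by
    rw [AlgHom.map_adjugate]
    rfl
  intro i j
  rw [hN]
  exact (N.adjugate i j).2

lemma fromBlocks_mem_matrix {M N : Matrix ι ι A} (hM : M ∈ S.matrix) (hN : N ∈ S.matrix) :
    fromBlocks 0 M N 0 ∈ S.matrix := by
  rintro (i | i) (j | j)
  exacts [zero_mem S, hM i j, hN i j, zero_mem S]

end SubalgebraMatrix

end Parity

theorem stmt10_general {d0 d1 : Matrix (Fin 2) (Fin 2) R4}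
    (hmf : d1 * d0 = potential • (1 : Matrix (Fin 2) (Fin 2) R4))
    (hgr : ∀ i j, ∃ q, WHom ![1 / 6, 1, 2 / 3, 1 / 2] q (d1 i j))
    (hbd : d1.map setU0 = !![y ^ 2 - v, -x; x ^ 2, y ^ 2 + v])
    (hnd : ∃ a b : ℕ, coeff (mon a b 1 2)
        (str (pd 0 (fromBlocks 0 d1 d0 0) * pd 1 (fromBlocks 0 d1 d0 0)
          * pd 2 (fromBlocks 0 d1 d0 0) * pd 3 (fromBlocks 0 d1 d0 0))) ≠ 0) :
    ∃ s t : ℂ, t ^ 2 = 1 / 3 ∧ s ^ 12 = -576 * (26 * t - 15) ∧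
      ∃ P Q : Matrix (Fin 2) (Fin 2) R4, IsUnit P ∧ IsUnit Q ∧ P * d1 * Q = dE6 s t := by
  have hdet := det_eq_potential hmf hbd
  obtain ⟨l, m, b₁, b₂, hred, hdet'⟩ := exists_transvection_mul_eq_normalForm hgr hbd hdet
  rcases eq_or_ne b₁ 0 with rfl | hb
  · have hd0 : d0 = d1.adjugate :=
      eq_adjugate_of_mul_eq_det_smul_one (hdet ▸ prime_potential.ne_zero) (hdet ▸ hmf)
    have hop (k : ℂ) : -(C k * u ^ 2) ∈ evenInY :=
      neg_mem (mul_mem (evenInY.algebraMap_mem k) (pow_mem u_mem_evenInY 2))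
    have hd1 : d1 ∈ evenInY.matrix := by
      rw [eq_of_transvection_mul_mul_transvection_eq one_ne_zero hred]
      exact mul_mem (mul_mem (transvection_mem_matrix (hop l) _ _)
        (normalForm_zero_mem_matrix_evenInY b₂)) (transvection_mem_matrix (hop m) _ _)
    have hd : fromBlocks 0 d1 d0 0 ∈ evenInY.matrix :=
      fromBlocks_mem_matrix hd1 (hd0 ▸ adjugate_mem_matrix hd1)
    obtain ⟨a, b, hab⟩ := hnd
    exact absurd (coeff_str_pd_eq_zero_of_mem_evenInY hd (by simp)) hab
  · obtain ⟨t, ht, hs, rfl⟩ := exists_parameter_of_det_normalForm_eq hb hdet'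
    exact ⟨b₁, t, ht, hs, _, _, isUnit_transvection one_ne_zero _,
      isUnit_transvection one_ne_zero _, hred.trans (normalForm_eq_dE6 ht)⟩

theorem stmt10 (d0 d1 : Matrix (Fin 2) (Fin 2) R4)
    (hmf1 : d1 * d0
      = (x ^ 3 + y ^ 4 - u ^ 12 - v ^ 2) • (1 : Matrix (Fin 2) (Fin 2) R4))
    (hmf2 : d0 * d1
      = (x ^ 3 + y ^ 4 - u ^ 12 - v ^ 2) • (1 : Matrix (Fin 2) (Fin 2) R4))
    (hgr : ∃ α β : Fin 2 → ℚ, ∀ i j,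
        WHom ![1/6, 1, 2/3, 1/2] (1 + α j - β i) (d1 i j) ∧
        WHom ![1/6, 1, 2/3, 1/2] (1 + β j - α i) (d0 i j))
    (hbd1 : d1.map setU0 = !![y ^ 2 - v, -x; x ^ 2, y ^ 2 + v])
    (hbd0 : d0.map setU0 = !![y ^ 2 + v, x; -(x ^ 2), y ^ 2 - v])
    (hnd1 : ∃ a b : ℕ, coeff (mon a b 1 2)
        (str (pd 0 (Matrix.fromBlocks 0 d1 d0 0) * pd 1 (Matrix.fromBlocks 0 d1 d0 0)
          * pd 2 (Matrix.fromBlocks 0 d1 d0 0) * pd 3 (Matrix.fromBlocks 0 d1 d0 0))) ≠ 0)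
    (hnd2 : ∃ c e : ℕ, coeff (mon 10 0 c e)
        (str (pd 0 (Matrix.fromBlocks 0 d1 d0 0) * pd 1 (Matrix.fromBlocks 0 d1 d0 0)
          * pd 2 (Matrix.fromBlocks 0 d1 d0 0) * pd 3 (Matrix.fromBlocks 0 d1 d0 0))) ≠ 0) :
    ∃ s t : ℂ, t ^ 2 = 1/3 ∧ s ^ 12 = -576 * (26 * t - 15) ∧
      ∃ P Q : Matrix (Fin 2) (Fin 2) R4, IsUnit P ∧ IsUnit Q ∧
        P * d1 * Q = dE6 s t := by
  obtain ⟨α, β, hg⟩ := hgr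
  exact stmt10_general hmf1 (fun i j => ⟨_, (hg i j).1⟩) hbd1 hnd1
end
end
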